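/- arXiv:1904.10815 — 4 statements merged into one kernel-verified Lean document; each statement's English description precedes it below -/
import Mathlib

section
/- Let f : ℝ_{≥0} → ℝ_{≥0} be strictly increasing and α ∈ [0,1). If the set X(f,α) = { f(n)·e^{2πi n α} : n ∈ ℕ } ⊂ ℂ is s-uniformly discrete, then liminf_{n→∞} f(n)/√n ≥ s/2. -/
/-- The spiral point set `X(f,α) = { f(n)·e^{2πi n α} : n ∈ ℕ } ⊆ ℂ` for
`f : ℝ≥0 → ℝ≥0` and angle `α`. -/
noncomputable def spiralSet (f : NNReal → NNReal) (α : ℝ) : Set ℂ :=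
  {z : ℂ | ∃ n : ℕ, z = (f n : ℝ) * Complex.exp (2 * Real.pi * Complex.I * (n * α))}

/-!
The open balls of radius `s` around the points of an `s`-uniformly discrete set are pairwise
disjoint. If `|z₀| ≤ |z₁| ≤ ⋯`, those around `z₀, …, zₙ₋₁` all lie in the ball of radius `|zₙ| + s`
around the origin. Comparing areas, `n s² ≤ (|zₙ| + s)²`, so `|zₙ| / √n ≥ s - s / √n`. This gives
the lower bound `s`, twice the constant asked for.
-/

open Filter Function MeasureTheory Metric Module Topology

theorem forall_subsingleton_inter_ball_iff_pairwiseDisjoint {X : Type*} [PseudoMetricSpace X]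
    {S : Set X} {r : ℝ} :
    (∀ x, (S ∩ ball x r).Subsingleton) ↔ S.PairwiseDisjoint fun y => ball y r := by
  constructor
  · intro h y hy z hz hyz
    refine Set.disjoint_left.2 fun x hxy hxz => hyz (h x ⟨hy, ?_⟩ ⟨hz, ?_⟩)
    · exact mem_ball_comm.1 hxy
    · exact mem_ball_comm.1 hxz
  · rintro h x y ⟨hy, hyx⟩ z ⟨hz, hzx⟩
    by_contra hyz
    exact Set.disjoint_left.1 (h hy hz hyz) (mem_ball_comm.1 hyx) (mem_ball_comm.1 hzx)

theorem le_liminf_coe_div_of_mul_le_add {ι : Type*} {l : Filter ι} {u v : ι → ℝ} {b c : ℝ}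
    (hv : Tendsto v l atTop) (h : ∀ᶠ i in l, c * v i ≤ u i + b) :
    (c : EReal) ≤ liminf (fun i => ((u i / v i : ℝ) : EReal)) l := by
  rcases l.eq_or_neBot with rfl | _
  · simp
  have hlim : Tendsto (fun i => c - b / v i) l (𝓝 c) := by
    simpa only [sub_zero] using tendsto_const_nhds.sub (hv.const_div_atTop b)
  have hle : ∀ᶠ i in l, c - b / v i ≤ u i / v i := by
    filter_upwards [h, hv.eventually_gt_atTop 0] with i hi hpos
    rw [sub_le_iff_le_add, ← add_div, le_div_iff₀ hpos]
    exact hi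
  calc (c : EReal) = liminf (fun i => ((c - b / v i : ℝ) : EReal)) l :=
        (EReal.tendsto_coe.2 hlim).liminf_eq.symm
    _ ≤ liminf (fun i => ((u i / v i : ℝ) : EReal)) l :=
        liminf_le_liminf (hle.mono fun _ hi => EReal.coe_le_coe_iff.2 hi)

section Packing

variable {E : Type*} [NormedAddCommGroup E] [NormedSpace ℝ E] [FiniteDimensional ℝ E]

theorem card_mul_pow_finrank_le_of_pairwiseDisjoint_ball {ι : Type*} {t : Finset ι} {z : ι → E}
    {x : E} {r R : ℝ} (hr : 0 < r) (hR : 0 < R)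
    (hdisj : (t : Set ι).PairwiseDisjoint fun i => ball (z i) r)
    (hsub : ∀ i ∈ t, ball (z i) r ⊆ ball x R) :
    (t.card : ℝ) * r ^ finrank ℝ E ≤ R ^ finrank ℝ E := by
  borelize E
  let μ : Measure E := Measure.addHaar
  have hvolume : ∀ (y : E) {ρ : ℝ}, 0 < ρ →
      μ.real (ball y ρ) = ρ ^ finrank ℝ E * μ.real (ball 0 1) := fun y ρ hρ => by
    rw [measureReal_def, μ.addHaar_ball_of_pos y hρ, ENNReal.toReal_mul,
      ENNReal.toReal_ofReal (by positivity), measureReal_def]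
  have hunit : 0 < μ.real (ball (0 : E) 1) :=
    ENNReal.toReal_pos (measure_ball_pos μ 0 one_pos).ne' measure_ball_lt_top.ne
  refine le_of_mul_le_mul_right ?_ hunit
  calc (t.card : ℝ) * r ^ finrank ℝ E * μ.real (ball 0 1)
      = ∑ i ∈ t, μ.real (ball (z i) r) := by
        simp only [hvolume _ hr, Finset.sum_const, nsmul_eq_mul, mul_assoc]
    _ = μ.real (⋃ i ∈ t, ball (z i) r) :=
        (measureReal_biUnion_finset hdisj fun _ _ => measurableSet_ball).symm
    _ ≤ μ.real (ball x R) := measureReal_mono (Set.iUnion₂_subset hsub) measure_ball_lt_top.ne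
    _ = R ^ finrank ℝ E * μ.real (ball 0 1) := hvolume x hR

variable {z : ℕ → E} {s : ℝ}

theorem natCast_mul_pow_finrank_le_norm_add_pow (hs : 0 < s) (hmono : Monotone fun n => ‖z n‖)
    (hdisj : Pairwise (Disjoint on fun n => ball (z n) s)) (n : ℕ) :
    (n : ℝ) * s ^ finrank ℝ E ≤ (‖z n‖ + s) ^ finrank ℝ E := by
  have hsub : ∀ i ∈ Finset.range n, ball (z i) s ⊆ ball 0 (‖z n‖ + s) := fun i hi => by
    have hin : ‖z i‖ ≤ ‖z n‖ := hmono (Finset.mem_range.1 hi).le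
    refine ball_subset_ball' ?_
    rw [dist_zero_right]
    linarith
  simpa only [Finset.card_range] using card_mul_pow_finrank_le_of_pairwiseDisjoint_ball hs
    (by positivity) (hdisj.set_pairwise _) hsub

theorem le_liminf_norm_div_natCast_rpow_inv_finrank (hs : 0 < s)
    (hmono : Monotone fun n => ‖z n‖) (hdisj : Pairwise (Disjoint on fun n => ball (z n) s)) :
    (s : EReal) ≤ liminf
      (fun n : ℕ => ((‖z n‖ / (n : ℝ) ^ (finrank ℝ E : ℝ)⁻¹ : ℝ) : EReal)) atTop := by
  have : Nontrivial E := by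
    refine ⟨z 0, z 1, fun h => ?_⟩
    exact Set.disjoint_left.1 (hdisj zero_ne_one) (mem_ball_self hs) (h ▸ mem_ball_self hs)
  have hdim : 0 < finrank ℝ E := finrank_pos
  have hroot : Tendsto (fun n : ℕ => (n : ℝ) ^ (finrank ℝ E : ℝ)⁻¹) atTop atTop :=
    (tendsto_rpow_atTop (by positivity)).comp tendsto_natCast_atTop_atTop
  refine le_liminf_coe_div_of_mul_le_add (b := s) hroot (Eventually.of_forall fun n => ?_)
  refine le_of_pow_le_pow_left₀ hdim.ne' (by positivity) ?_
  rw [mul_pow, Real.rpow_inv_natCast_pow n.cast_nonneg hdim.ne', mul_comm]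
  exact natCast_mul_pow_finrank_le_norm_add_pow hs hmono hdisj n

end Packing

/-- The `n`-th point `f(n)·e^{2πi n α}` of the spiral, so that `spiralSet f α` is the range of
`spiralPoint f α`. -/
noncomputable def spiralPoint (f : NNReal → NNReal) (α : ℝ) (n : ℕ) : ℂ :=
  (f n : ℝ) * Complex.exp (2 * Real.pi * Complex.I * (n * α))

section Spiral

variable {f : NNReal → NNReal} {α : ℝ}

theorem spiralPoint_mem_spiralSet (n : ℕ) : spiralPoint f α n ∈ spiralSet f α :=
  ⟨n, rfl⟩

theorem norm_spiralPoint (n : ℕ) : ‖spiralPoint f α n‖ = f n := by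
  have harg : (2 * Real.pi * Complex.I * (n * α) : ℂ)
      = ((2 * Real.pi * (n * α) : ℝ) : ℂ) * Complex.I := by
    push_cast
    ring
  rw [spiralPoint, norm_mul, harg, Complex.norm_exp_ofReal_mul_I, mul_one, Complex.norm_real,
    NNReal.norm_eq]

theorem strictMono_norm_spiralPoint (hf : StrictMono f) :
    StrictMono fun n => ‖spiralPoint f α n‖ := by
  intro m n hmn
  simpa only [norm_spiralPoint, NNReal.coe_lt_coe] using hf (Nat.cast_lt.2 hmn)

theorem spiralPoint_injective (hf : StrictMono f) : Injective (spiralPoint f α) :=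
  .of_comp (f := norm) (strictMono_norm_spiralPoint hf).injective

end Spiral

theorem liminf_ge_of_uniformly_discrete_general {f : NNReal → NNReal} (hf : StrictMono f)
    {α s : ℝ} (hs : 0 < s) (hdisc : ∀ x : ℂ, (spiralSet f α ∩ ball x s).Subsingleton) :
    (s : EReal) ≤ liminf (fun n : ℕ => ((f n / √n : ℝ) : EReal)) atTop := by
  have hdisj : Pairwise (Disjoint on fun n => ball (spiralPoint f α n) s) := fun m n hmn =>
    forall_subsingleton_inter_ball_iff_pairwiseDisjoint.1 hdisc (spiralPoint_mem_spiralSet m)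
      (spiralPoint_mem_spiralSet n) ((spiralPoint_injective hf).ne hmn)
  simpa only [norm_spiralPoint, Complex.finrank_real_complex, Nat.cast_ofNat, ← one_div,
    ← Real.sqrt_eq_rpow] using le_liminf_norm_div_natCast_rpow_inv_finrank hs
      (strictMono_norm_spiralPoint hf).monotone hdisj

/-- If `f : ℝ≥0 → ℝ≥0` is strictly increasing, `α ∈ [0,1)`, and
`X(f,α)` is `s`-uniformly discrete (every open ball of radius `s` contains at
most one of its points), then `liminf_{n→∞} f(n)/√n ≥ s/2`. -/
theorem liminf_ge_of_uniformly_discrete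
    (f : NNReal → NNReal) (hf : StrictMono f)
    (α : ℝ) (hα : α ∈ Set.Ico (0 : ℝ) 1) (s : ℝ) (hs : 0 < s)
    (hdisc : ∀ x : ℂ, Set.Subsingleton (spiralSet f α ∩ Metric.ball x s)) :
    ((s / 2 : ℝ) : EReal) ≤
      Filter.liminf (fun n : ℕ => (((f n : ℝ) / Real.sqrt n : ℝ) : EReal))
        Filter.atTop :=
  (EReal.coe_le_coe_iff.2 (half_le_self hs.le)).trans
    (liminf_ge_of_uniformly_discrete_general hf hs hdisc)
end

section
/- Let α ∈ [0,1) be irrational. The set X(√t, α) = { √n · e^{2πi n α} : n ∈ ℕ } ⊂ ℂ is relatively dense if and only if α is badly approximable. -/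
/-- The Fermat-spiral point set `X(√t, α) = { √n·e^{2πi n α} : n ∈ ℕ } ⊆ ℂ`. -/
noncomputable def fermatSpiral (α : ℝ) : Set ℂ :=
  {z : ℂ | ∃ n : ℕ, z = Real.sqrt n * Complex.exp (2 * Real.pi * Complex.I * (n * α))}

/-- `X ⊆ ℂ` is relatively dense: some radius `r > 0` such that every open ball of
radius `r` meets `X`. -/
def IsRelativelyDense (X : Set ℂ) : Prop :=
  ∃ r : ℝ, 0 < r ∧ ∀ x : ℂ, ∃ z ∈ X, z ∈ Metric.ball x r

/-- `α` is badly approximable: `q·|qα − p| ≥ C > 0` for all `p ∈ ℤ`, `q ∈ ℕ`, `q ≥ 1`. -/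
def IsBadlyApproximable (α : ℝ) : Prop :=
  ∃ C : ℝ, 0 < C ∧ ∀ (p : ℤ) (q : ℕ), 1 ≤ q → C ≤ (q : ℝ) * |(q : ℝ) * α - (p : ℝ)|

/-!
Both properties say that the first `N` multiples of `α` in `ℝ/ℤ` come within `O(1/N)` of every
point.

An annulus of radius `R` and bounded width contains the spiral points `√n · e(nα)` for a block of
about `R` consecutive `n`, and bounded distance at radius `R` is angular distance `O(1/R)`; rotating
a block of consecutive multiples of `α` back to `0` costs nothing because the target point is
arbitrary.

If `α` is badly approximable, Dirichlet's theorem gives, for each `N`, a torsion point `u` whose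
order `q ≤ N` is comparable to `N` with `α` within `1/(qN)` of `u`; the multiples of `u` are
`1/q`-spaced and those of `α` follow them. Conversely, if `‖qα‖` is tiny then the multiples of `α`
stay close to the `q`-torsion points for a long time, and so miss the midpoint `1/(2q)`.
-/

section AddCircle

open AddCircle

variable {T : ℝ}

lemma exists_coe_eq_and_abs_eq_norm (x : AddCircle T) :
    ∃ y : ℝ, (y : AddCircle T) = x ∧ |y| = ‖x‖ := by
  induction x using QuotientAddGroup.induction_on with | H x =>
  refine ⟨x - round (T⁻¹ * x) * T, ?_, (norm_eq T).symm⟩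
  rw [coe_sub, ← zsmul_eq_mul, coe_zsmul, coe_period, smul_zero, sub_zero]

lemma norm_toCircle_sub_toCircle (hT : 0 < T) (x y : AddCircle T) :
    ‖(toCircle x : ℂ) - toCircle y‖ = 2 * Real.sin (Real.pi * dist x y / T) := by
  obtain ⟨d, hd, hd_abs⟩ := exists_coe_eq_and_abs_eq_norm (x - y)
  have hd_half : |d| ≤ T / 2 := by
    simpa only [hd_abs, abs_of_pos hT] using norm_le_half_period T hT.ne'
  have hsin : 0 ≤ Real.sin (Real.pi * |d| / T) := by
    apply Real.sin_nonneg_of_nonneg_of_le_pi (by positivity)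
    rw [div_le_iff₀ hT]
    nlinarith [Real.pi_pos]
  have hfactor : (toCircle x : ℂ) - toCircle y = toCircle y * (toCircle (d : AddCircle T) - 1) := by
    rw [mul_sub, ← Circle.coe_mul, ← toCircle_add, hd, add_sub_cancel, mul_one]
  calc ‖(toCircle x : ℂ) - toCircle y‖ = ‖(toCircle (d : AddCircle T) : ℂ) - 1‖ := by
        rw [hfactor, norm_mul, Circle.norm_coe, one_mul]
    _ = 2 * |Real.sin (Real.pi * d / T)| := by
        rw [toCircle_apply_mk, Circle.coe_exp, mul_comm, Complex.norm_exp_I_mul_ofReal_sub_one,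
          norm_mul, Real.norm_two, Real.norm_eq_abs]
        ring_nf
    _ = 2 * Real.sin (Real.pi * dist x y / T) := by
        rw [dist_eq_norm, ← hd_abs, ← abs_of_nonneg hsin]
        congr 1
        rcases abs_choice d with h | h <;> rw [h]
        rw [mul_neg, neg_div, Real.sin_neg, abs_neg]

lemma norm_toCircle_sub_toCircle_le (hT : 0 < T) (x y : AddCircle T) :
    ‖(toCircle x : ℂ) - toCircle y‖ ≤ 2 * Real.pi / T * dist x y := by
  rw [norm_toCircle_sub_toCircle hT]
  calc 2 * Real.sin (Real.pi * dist x y / T) ≤ 2 * (Real.pi * dist x y / T) := by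
        gcongr
        exact Real.sin_le (by positivity)
    _ = 2 * Real.pi / T * dist x y := by ring

lemma mul_dist_le_norm_toCircle_sub_toCircle (hT : 0 < T) (x y : AddCircle T) :
    4 / T * dist x y ≤ ‖(toCircle x : ℂ) - toCircle y‖ := by
  have hdist : dist x y ≤ T / 2 := by
    simpa only [dist_eq_norm, abs_of_pos hT] using norm_le_half_period T hT.ne'
  rw [norm_toCircle_sub_toCircle hT]
  calc 4 / T * dist x y = 2 * (2 / Real.pi * (Real.pi * dist x y / T)) := by
        field_simp
        ring
    _ ≤ 2 * Real.sin (Real.pi * dist x y / T) := by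
        gcongr
        apply Real.mul_le_sin (by positivity)
        rw [div_le_iff₀ hT]
        nlinarith [Real.pi_pos]

lemma exists_norm_smul_toCircle_eq (hT : T ≠ 0) (z : ℂ) :
    ∃ x : AddCircle T, ‖z‖ • (toCircle x : ℂ) = z := by
  refine ⟨(homeomorphCircle hT).symm (Circle.exp z.arg), ?_⟩
  rw [← homeomorphCircle_apply hT, Homeomorph.apply_symm_apply, Circle.coe_exp, Complex.real_smul,
    Complex.norm_mul_exp_arg_mul_I]

lemma exists_lt_addOrderOf_nsmul_eq [Fact (0 < T)] {u v : AddCircle T} (hu : IsOfFinAddOrder u)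
    (hv : addOrderOf u • v = 0) : ∃ j < addOrderOf u, j • u = v := by
  have hpos := hu.addOrderOf_pos
  obtain ⟨m, hcop, -, hm⟩ := exists_gcd_eq_one_of_isOfFinAddOrder hu
  obtain ⟨k, -, hk⟩ := (AddCircle.nsmul_eq_zero_iff hpos).mp hv
  obtain ⟨j, hj, hmod⟩ := Nat.exists_mul_mod_eq_of_coprime k hcop hpos.ne'
  refine ⟨j, hj, ?_⟩
  generalize addOrderOf u = n at *
  rw [← hm, ← hk, natCast_div_mul_eq_nsmul, natCast_div_mul_eq_nsmul, ← mul_nsmul,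
    nsmul_eq_nsmul_iff_modEq, addOrderOf_period_div hpos]
  exact hmod

lemma exists_nsmul_eq_zero_and_mul_norm_sub_le (hT : 0 < T) {n : ℕ} (hn : n ≠ 0)
    (x : AddCircle T) : ∃ v : AddCircle T, n • v = 0 ∧ n * ‖v - x‖ ≤ T / 2 := by
  obtain ⟨y, hy, hy_abs⟩ := exists_coe_eq_and_abs_eq_norm (n • x)
  have hn' : (n : ℝ) ≠ 0 := Nat.cast_ne_zero.mpr hn
  refine ⟨x - (y / n : ℝ), ?_, ?_⟩
  · rw [smul_sub, ← coe_nsmul, nsmul_eq_mul, mul_div_cancel₀ _ hn', hy, sub_self]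
  · calc n * ‖x - (y / n : ℝ) - x‖ = n * ‖((y / n : ℝ) : AddCircle T)‖ := by
          rw [sub_sub_cancel_left, norm_neg]
      _ ≤ n * |y / n| := by gcongr; exact QuotientAddGroup.norm_mk_le_norm
      _ = ‖n • x‖ := by rw [abs_div, Nat.abs_cast, mul_div_cancel₀ _ hn', hy_abs]
      _ ≤ T / 2 := by simpa only [abs_of_pos hT] using norm_le_half_period T hT.ne'

lemma exists_lt_addOrderOf_mul_norm_nsmul_sub_le [hT : Fact (0 < T)] {u : AddCircle T}
    (hu : IsOfFinAddOrder u) (x : AddCircle T) :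
    ∃ j < addOrderOf u, addOrderOf u * ‖j • u - x‖ ≤ T / 2 := by
  obtain ⟨v, hv, hvx⟩ :=
    exists_nsmul_eq_zero_and_mul_norm_sub_le hT.out hu.addOrderOf_pos.ne' x
  obtain ⟨j, hj, rfl⟩ := exists_lt_addOrderOf_nsmul_eq hu hv
  exact ⟨j, hj, hvx⟩

lemma exists_addOrderOf_le_and_mul_norm_sub_le [hT : Fact (0 < T)] (x : AddCircle T) {N : ℕ}
    (hN : 0 < N) : ∃ u : AddCircle T, IsOfFinAddOrder u ∧ addOrderOf u ≤ N ∧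
      (N + 1) * (addOrderOf u * ‖x - u‖) ≤ T := by
  induction x using QuotientAddGroup.induction_on with | H x =>
  have hT_pos := hT.out
  obtain ⟨q, hxq, hqN⟩ := Real.exists_rat_abs_sub_le_and_den_le (x / T) hN
  have hden : (0 : ℝ) < q.den := Nat.cast_pos.mpr q.den_pos
  have horder : addOrderOf ((q * T : ℝ) : AddCircle T) = q.den := addOrderOf_coe_rat
  refine ⟨(q * T : ℝ), addOrderOf_pos_iff.mp (horder ▸ q.den_pos), horder ▸ hqN, ?_⟩
  have hdist : ‖(x : AddCircle T) - (q * T : ℝ)‖ ≤ T * |x / T - q| := by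
    calc ‖(x : AddCircle T) - (q * T : ℝ)‖ ≤ |x - q * T| := QuotientAddGroup.norm_mk_le_norm
      _ = |T * (x / T - q)| := by rw [mul_sub, mul_div_cancel₀ _ hT_pos.ne', mul_comm T]
      _ = T * |x / T - q| := by rw [abs_mul, abs_of_pos hT_pos]
  calc (N + 1) * (addOrderOf ((q * T : ℝ) : AddCircle T) * ‖(x : AddCircle T) - (q * T : ℝ)‖)
      ≤ (N + 1) * (q.den * (T * (1 / ((N + 1) * q.den)))) := by
        rw [horder]
        gcongr
        exact hdist.trans (by gcongr)
    _ = T := by field_simp [hden.ne']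

end AddCircle

open AddCircle (toCircle)

section Norm

variable {E : Type*} [SeminormedAddCommGroup E]

lemma norm_nsmul_le_mul_norm_nsmul_add (m n : ℕ) (x y : E) :
    ‖m • y‖ ≤ n * ‖m • x‖ + m * ‖n • x - y‖ := by
  calc ‖m • y‖ = ‖n • m • x - m • (n • x - y)‖ := by rw [smul_sub, smul_comm n m, sub_sub_cancel]
    _ ≤ ‖n • m • x‖ + ‖m • (n • x - y)‖ := norm_sub_le _ _
    _ ≤ n * ‖m • x‖ + m * ‖n • x - y‖ := add_le_add norm_nsmul_le norm_nsmul_le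

lemma norm_addOrderOf_nsmul_le (x u : E) : ‖addOrderOf u • x‖ ≤ addOrderOf u * ‖x - u‖ := by
  calc ‖addOrderOf u • x‖ = ‖addOrderOf u • (x - u)‖ := by
        rw [smul_sub, addOrderOf_nsmul_eq_zero, sub_zero]
    _ ≤ addOrderOf u * ‖x - u‖ := norm_nsmul_le

lemma norm_nsmul_sub_le_mul_norm_sub_add (n : ℕ) (x u y : E) :
    ‖n • x - y‖ ≤ n * ‖x - u‖ + ‖n • u - y‖ := by
  calc ‖n • x - y‖ = ‖n • (x - u) + (n • u - y)‖ := by rw [smul_sub, sub_add_sub_cancel]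
    _ ≤ ‖n • (x - u)‖ + ‖n • u - y‖ := norm_add_le _ _
    _ ≤ n * ‖x - u‖ + ‖n • u - y‖ := by gcongr; exact norm_nsmul_le

variable [NormedSpace ℝ E] {u v : E} {s R : ℝ}

lemma norm_smul_sub_smul_le (hu : ‖u‖ = 1) (hR : 0 ≤ R) :
    ‖s • u - R • v‖ ≤ |s - R| + R * ‖u - v‖ := by
  calc ‖s • u - R • v‖ = ‖(s - R) • u + R • (u - v)‖ := by congr 1; module
    _ ≤ ‖(s - R) • u‖ + ‖R • (u - v)‖ := norm_add_le _ _
    _ = |s - R| + R * ‖u - v‖ := by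
      rw [norm_smul, norm_smul, hu, mul_one, Real.norm_eq_abs, Real.norm_of_nonneg hR]

lemma abs_sub_le_norm_smul_sub_smul (hu : ‖u‖ = 1) (hv : ‖v‖ = 1) (hs : 0 ≤ s) (hR : 0 ≤ R) :
    |s - R| ≤ ‖s • u - R • v‖ := by
  simpa only [norm_smul, hu, hv, mul_one, Real.norm_of_nonneg hs, Real.norm_of_nonneg hR]
    using abs_norm_sub_norm_le (s • u) (R • v)

lemma mul_norm_sub_le_two_mul_norm_smul_sub_smul (hu : ‖u‖ = 1) (hv : ‖v‖ = 1) (hs : 0 ≤ s)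
    (hR : 0 ≤ R) : R * ‖u - v‖ ≤ 2 * ‖s • u - R • v‖ := by
  calc R * ‖u - v‖ = ‖(s • u - R • v) - (s - R) • u‖ := by
        rw [← Real.norm_of_nonneg hR, ← norm_smul, Real.norm_of_nonneg hR]
        congr 1
        module
    _ ≤ ‖s • u - R • v‖ + ‖(s - R) • u‖ := norm_sub_le _ _
    _ = ‖s • u - R • v‖ + |s - R| := by rw [norm_smul, hu, mul_one, Real.norm_eq_abs]
    _ ≤ 2 * ‖s • u - R • v‖ := by linarith [abs_sub_le_norm_smul_sub_smul hu hv hs hR]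

end Norm

/-- A sequence in `ℝ/ℤ` has low dispersion if its first `N` terms come within `O(1/N)` of every
point, which is the best possible order. -/
def IsLowDispersion (x : ℕ → UnitAddCircle) : Prop :=
  ∃ K : ℝ, 0 < K ∧ ∀ (N : ℕ) (y : UnitAddCircle), 0 < N → ∃ n < N, N * dist (x n) y ≤ K

lemma isBadlyApproximable_iff_exists_le_mul_norm_nsmul {α : ℝ} :
    IsBadlyApproximable α ↔
      ∃ C : ℝ, 0 < C ∧ ∀ q : ℕ, 1 ≤ q → C ≤ q * ‖q • (α : UnitAddCircle)‖ := by
  have norm_nsmul_coe (q : ℕ) : ‖q • (α : UnitAddCircle)‖ = |q * α - round (q * α)| := by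
    rw [← AddCircle.coe_nsmul, nsmul_eq_mul, UnitAddCircle.norm_eq]
  constructor
  · rintro ⟨C, hC, h⟩
    exact ⟨C, hC, fun q hq ↦ norm_nsmul_coe q ▸ h _ q hq⟩
  · rintro ⟨C, hC, h⟩
    refine ⟨C, hC, fun p q hq ↦ (h q hq).trans ?_⟩
    rw [norm_nsmul_coe]
    exact mul_le_mul_of_nonneg_left (round_le _ p) q.cast_nonneg

lemma IsBadlyApproximable.isLowDispersion {α : ℝ} (h : IsBadlyApproximable α) :
    IsLowDispersion fun n ↦ n • (α : UnitAddCircle) := by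
  obtain ⟨C, hC, h⟩ := isBadlyApproximable_iff_exists_le_mul_norm_nsmul.mp h
  refine ⟨1 + 1 / (2 * C), by positivity, fun N y hN ↦ ?_⟩
  obtain ⟨u, hu, huN, hαu⟩ := exists_addOrderOf_le_and_mul_norm_sub_le (α : UnitAddCircle) hN
  obtain ⟨j, hj, hjy⟩ := exists_lt_addOrderOf_mul_norm_nsmul_sub_le hu y
  have horder := norm_addOrderOf_nsmul_le (α : UnitAddCircle) u
  have hC_le := h (addOrderOf u) hu.addOrderOf_pos
  refine ⟨j, hj.trans_le huN, ?_⟩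
  generalize addOrderOf u = q at *
  have hq_large : C * N ≤ q := by
    calc C * N ≤ q * (q * ‖(α : UnitAddCircle) - u‖) * (N + 1) := by
          gcongr
          · exact hC_le.trans (by gcongr)
          · linarith
      _ = q * ((N + 1) * (q * ‖(α : UnitAddCircle) - u‖)) := by ring
      _ ≤ q := mul_le_of_le_one_right q.cast_nonneg hαu
  have hdist_approx : N * (j * ‖(α : UnitAddCircle) - u‖) ≤ 1 := by
    refine le_trans ?_ hαu
    gcongr
    linarith
  have hdist_torsion : N * ‖j • u - y‖ ≤ 1 / (2 * C) := by
    rw [le_div_iff₀ (by positivity)]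
    calc N * ‖j • u - y‖ * (2 * C) = 2 * (C * N * ‖j • u - y‖) := by ring
      _ ≤ 2 * (q * ‖j • u - y‖) := by gcongr
      _ ≤ 1 := by linarith
  calc N * dist (j • (α : UnitAddCircle)) y
      ≤ N * (j * ‖(α : UnitAddCircle) - u‖ + ‖j • u - y‖) := by
        rw [dist_eq_norm]
        gcongr
        exact norm_nsmul_sub_le_mul_norm_sub_add j _ u y
    _ ≤ 1 + 1 / (2 * C) := by linarith

lemma IsLowDispersion.isBadlyApproximable {α : ℝ}
    (h : IsLowDispersion fun n ↦ n • (α : UnitAddCircle)) : IsBadlyApproximable α := by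
  obtain ⟨K, hK, h⟩ := h
  refine isBadlyApproximable_iff_exists_le_mul_norm_nsmul.mpr
    ⟨1 / (16 * K), by positivity, fun q hq ↦ ?_⟩
  have hq_pos : (0 : ℝ) < q := Nat.cast_pos.mpr hq
  -- `1 / (2q)` lies midway between two `q`-torsion points, hence far from multiples of `α` when
  -- `q • α` is small.
  obtain ⟨n, hnN, hn⟩ :=
    h (⌊4 * q * K⌋₊ + 1) ((1 / (2 * q) : ℝ) : UnitAddCircle) (Nat.succ_pos _)
  set δ := dist (n • (α : UnitAddCircle)) ((1 / (2 * q) : ℝ) : UnitAddCircle) with hδ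
  have hhalf : ‖q • ((1 / (2 * q) : ℝ) : UnitAddCircle)‖ = 1 / 2 := by
    rw [← AddCircle.coe_nsmul, nsmul_eq_mul,
      show (q : ℝ) * (1 / (2 * q)) = 1 / 2 by field_simp [hq_pos.ne'],
      AddCircle.norm_half_period_eq, abs_one]
  have hsplit : 1 / 2 ≤ n * ‖q • (α : UnitAddCircle)‖ + q * δ := by
    rw [← hhalf, hδ, dist_eq_norm]
    exact norm_nsmul_le_mul_norm_nsmul_add q n _ _
  have hδ_le : q * δ ≤ 1 / 4 := by
    have : 4 * q * K * δ ≤ K := by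
      refine le_trans ?_ hn
      push_cast
      gcongr
      exact (Nat.lt_floor_add_one _).le
    nlinarith
  have hn_le : (n : ℝ) ≤ 4 * q * K :=
    (Nat.le_floor_iff (by positivity)).mp (Nat.lt_succ_iff.mp hnN)
  rw [div_le_iff₀ (by positivity)]
  nlinarith [norm_nonneg (q • (α : UnitAddCircle))]

lemma isLowDispersion_nsmul_iff_isBadlyApproximable {α : ℝ} :
    IsLowDispersion (fun n ↦ n • (α : UnitAddCircle)) ↔ IsBadlyApproximable α :=
  ⟨IsLowDispersion.isBadlyApproximable, IsBadlyApproximable.isLowDispersion⟩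

lemma mem_fermatSpiral {α : ℝ} {z : ℂ} :
    z ∈ fermatSpiral α ↔ ∃ n : ℕ, z = √n • (toCircle (n • (α : UnitAddCircle)) : ℂ) := by
  refine exists_congr fun n ↦ ?_
  rw [← AddCircle.coe_nsmul, AddCircle.toCircle_apply_mk, Circle.coe_exp, Complex.real_smul]
  push_cast
  ring_nf

lemma abs_sqrt_ceil_sq_add_sub_le {R : ℝ} (hR : 0 ≤ R) {n : ℕ} (hn : n ≤ ⌈R⌉₊) :
    |√(⌈R ^ 2⌉₊ + n : ℕ) - R| ≤ 2 := by
  have hceil_sq_ge : R ^ 2 ≤ ⌈R ^ 2⌉₊ := Nat.le_ceil _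
  have hceil_sq_lt : (⌈R ^ 2⌉₊ : ℝ) < R ^ 2 + 1 := Nat.ceil_lt_add_one (by positivity)
  have hn_lt : (n : ℝ) < R + 1 := (Nat.cast_le.mpr hn).trans_lt (Nat.ceil_lt_add_one hR)
  have hlower : R ≤ √(⌈R ^ 2⌉₊ + n : ℕ) := Real.le_sqrt_of_sq_le (by push_cast; linarith)
  have hupper : √(⌈R ^ 2⌉₊ + n : ℕ) ≤ R + 2 := by
    rw [Real.sqrt_le_left (by positivity)]
    push_cast
    nlinarith
  rw [abs_of_nonneg (sub_nonneg.mpr hlower)]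
  linarith

lemma IsLowDispersion.isRelativelyDense_fermatSpiral {α : ℝ}
    (h : IsLowDispersion fun n ↦ n • (α : UnitAddCircle)) :
    IsRelativelyDense (fermatSpiral α) := by
  obtain ⟨K, hK, h⟩ := h
  refine ⟨3 + 2 * Real.pi * K, by positivity, fun z ↦ ?_⟩
  obtain ⟨x, hx⟩ := exists_norm_smul_toCircle_eq (one_ne_zero (α := ℝ)) z
  set R := ‖z‖
  have hR : 0 ≤ R := norm_nonneg z
  set M := ⌈R ^ 2⌉₊
  set N := ⌈R⌉₊ + 1
  obtain ⟨n, hnN, hn⟩ := h N (x - M • (α : UnitAddCircle)) (Nat.succ_pos _)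
  have hangle : R * dist ((M + n) • (α : UnitAddCircle)) x ≤ K := by
    have hRN : R ≤ N := (Nat.le_ceil R).trans (by simp [N])
    refine le_trans ?_ hn
    rw [dist_eq_norm, dist_eq_norm, add_nsmul, sub_sub_eq_add_sub, add_comm (n • _)]
    gcongr
  have hradius : |√(M + n : ℕ) - R| ≤ 2 :=
    abs_sqrt_ceil_sq_add_sub_le hR (Nat.lt_succ_iff.mp hnN)
  refine ⟨_, mem_fermatSpiral.mpr ⟨M + n, rfl⟩, ?_⟩
  set y := (M + n) • (α : UnitAddCircle)
  rw [mem_ball_iff_norm, ← hx]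
  calc ‖√(M + n : ℕ) • (toCircle y : ℂ) - R • (toCircle x : ℂ)‖
      ≤ |√(M + n : ℕ) - R| + R * ‖(toCircle y : ℂ) - toCircle x‖ :=
        norm_smul_sub_smul_le (Circle.norm_coe _) hR
    _ ≤ 2 + R * (2 * Real.pi / 1 * dist y x) := by
        gcongr
        exact norm_toCircle_sub_toCircle_le one_pos y x
    _ = 2 + 2 * Real.pi * (R * dist y x) := by ring
    _ ≤ 2 + 2 * Real.pi * K := by gcongr
    _ < 3 + 2 * Real.pi * K := by linarith

lemma abs_sub_lt_and_two_mul_dist_lt_of_mem_ball {s R r : ℝ} (hs : 0 ≤ s) (hR : 0 ≤ R)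
    {x y : UnitAddCircle} (h : s • (toCircle x : ℂ) ∈ Metric.ball (R • (toCircle y : ℂ)) r) :
    |s - R| < r ∧ 2 * (R * dist x y) < r := by
  rw [mem_ball_iff_norm] at h
  refine ⟨(abs_sub_le_norm_smul_sub_smul (Circle.norm_coe _) (Circle.norm_coe _)
    hs hR).trans_lt h, ?_⟩
  have hchord : R * (4 / 1 * dist x y) ≤ R * ‖(toCircle x : ℂ) - toCircle y‖ := by
    gcongr
    exact mul_dist_le_norm_toCircle_sub_toCircle one_pos x y
  have hangle := mul_norm_sub_le_two_mul_norm_smul_sub_smul (Circle.norm_coe (toCircle x))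
    (Circle.norm_coe (toCircle y)) hs hR
  linarith

lemma IsRelativelyDense.isLowDispersion {α : ℝ} (h : IsRelativelyDense (fermatSpiral α)) :
    IsLowDispersion fun n ↦ n • (α : UnitAddCircle) := by
  obtain ⟨r, hr, h⟩ := h
  refine ⟨2 * r ^ 2, by positivity, fun N x hN ↦ ?_⟩
  -- The annulus of radius `R` and width `2r` contains about `(R + r)² - (R - r)² = 4rR = N` points.
  set R := N / (4 * r) with hR_def
  have hNR : (N : ℝ) = 4 * r * R := by rw [hR_def]; field_simp
  have hR : 0 ≤ R := by positivity
  rcases lt_or_ge R r with hRr | hrR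
  · have hdist : dist (0 • (α : UnitAddCircle)) x ≤ 1 / 2 := by
      simpa only [dist_eq_norm, abs_one] using AddCircle.norm_le_half_period 1 one_ne_zero
    exact ⟨0, hN, by nlinarith⟩
  set M := ⌈(R - r) ^ 2⌉₊
  set y := M • (α : UnitAddCircle) + x with hy
  obtain ⟨z, hz, hzr⟩ := h (R • (toCircle y : ℂ))
  obtain ⟨m, rfl⟩ := mem_fermatSpiral.mp hz
  obtain ⟨hradius, hangle⟩ :=
    abs_sub_lt_and_two_mul_dist_lt_of_mem_ball (Real.sqrt_nonneg m) hR hzr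
  obtain ⟨hlower, hupper⟩ := abs_lt.mp hradius
  have hMm : M ≤ m :=
    Nat.ceil_le.mpr ((Real.lt_sqrt (sub_nonneg.mpr hrR)).mp (by linarith)).le
  have hmNM : m < N + M := by
    have hm : (m : ℝ) < (R + r) ^ 2 := (Real.sqrt_lt' (by positivity)).mp (by linarith)
    have hM : (R - r) ^ 2 ≤ M := Nat.le_ceil _
    have : (m : ℝ) < N + M := by linarith
    exact_mod_cast this
  have hdist : dist ((m - M) • (α : UnitAddCircle)) x = dist (m • (α : UnitAddCircle)) y := by
    rw [hy, dist_eq_norm, dist_eq_norm, sub_nsmul _ hMm, ← sub_eq_add_neg, sub_sub]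
  refine ⟨m - M, by omega, ?_⟩
  calc N * dist ((m - M) • (α : UnitAddCircle)) x
      = 2 * r * (2 * (R * dist (m • (α : UnitAddCircle)) y)) := by rw [hdist, hNR]; ring
    _ ≤ 2 * r * r := by gcongr
    _ = 2 * r ^ 2 := by ring

lemma isRelativelyDense_fermatSpiral_iff_isLowDispersion {α : ℝ} :
    IsRelativelyDense (fermatSpiral α) ↔ IsLowDispersion fun n ↦ n • (α : UnitAddCircle) :=
  ⟨IsRelativelyDense.isLowDispersion, IsLowDispersion.isRelativelyDense_fermatSpiral⟩

theorem fermatSpiral_relativelyDense_iff_badlyApproximable_general (α : ℝ) :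
    IsRelativelyDense (fermatSpiral α) ↔ IsBadlyApproximable α :=
  isRelativelyDense_fermatSpiral_iff_isLowDispersion.trans
    isLowDispersion_nsmul_iff_isBadlyApproximable

/-- For irrational `α ∈ [0,1)`, the set `X(√t, α)` is relatively
dense if and only if `α` is badly approximable. -/
theorem fermatSpiral_relativelyDense_iff_badlyApproximable
    (α : ℝ) (hα : α ∈ Set.Ico (0 : ℝ) 1) (hirr : Irrational α) :
    IsRelativelyDense (fermatSpiral α) ↔ IsBadlyApproximable α :=
  fermatSpiral_relativelyDense_iff_badlyApproximable_general α
end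

section
/- Let α ∈ [0,1) be irrational with continued fraction expansion α = [0; a₁, a₂, a₃, …]. If the set X(√t, α) = { √n · e^{2πi n α} : n ∈ ℕ } ⊂ ℂ is r-relatively dense for some r > 1/2, then every partial quotient satisfies aₖ ≤ ⌊96 r²⌋; in particular α is badly approximable. -/
/-!
Suppose `α = p / q + ε` with `q² |ε|` much smaller than `1 / r²`. Near radius `R = 2rq` the spiral
then looks like `q` straight arms: the angle of its `n`-th point is `n p / q + R² ε` turns, up to an
error `(n - R²) ε` which is small compared with `1 / q` as long as `|√n - R| < r`. A point of
modulus `R` midway between two arms is at distance at least `r` from the spiral, so relative density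
forces `q |q α - p| ≥ 1 / (96 r²)`. Applied to the convergents of `α`, for which
`a_{k+1} q_k |q_k α - p_k| ≤ 1`, this bounds the partial quotients.
-/

/-- `X` is `r`-relatively dense: every open ball of radius `r` meets `X`. -/
def IsRelDense {E : Type*} [PseudoMetricSpace E] (X : Set E) (r : ℝ) : Prop :=
  ∀ x : E, ∃ z ∈ X, z ∈ Metric.ball x r

theorem IsRelDense.pos {E : Type*} [PseudoMetricSpace E] [Nonempty E] {X : Set E} {r : ℝ}
    (h : IsRelDense X r) : 0 < r := by
  obtain ⟨_, _, hz⟩ := h (Classical.arbitrary E)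
  exact Metric.pos_of_mem_ball hz

theorem two_mul_abs_sub_round_le_abs_sin (x : ℝ) :
    2 * |x - round x| ≤ |Real.sin (Real.pi * x)| := by
  have hπ : |Real.pi * (x - round x)| = Real.pi * |x - round x| := by
    rw [abs_mul, abs_of_pos Real.pi_pos]
  have hhalf : |Real.pi * (x - round x)| ≤ Real.pi / 2 := by
    rw [hπ]
    linarith [mul_le_mul_of_nonneg_left (abs_sub_round x) Real.pi_pos.le]
  calc 2 * |x - round x| = 2 / Real.pi * |Real.pi * (x - round x)| := by
        rw [hπ]; field_simp
    _ ≤ |Real.sin (Real.pi * (x - round x))| := Real.mul_abs_le_abs_sin hhalf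
    _ = |Real.sin (Real.pi * x)| := by
        rw [mul_sub, mul_comm Real.pi (round x : ℝ), Real.sin_sub_int_mul_pi, abs_mul, abs_zpow,
          abs_neg, abs_one, one_zpow, one_mul]

theorem norm_polar_sub_polar_sq (s t u v : ℝ) :
    ‖(s : ℂ) * Complex.exp (u * Complex.I) - t * Complex.exp (v * Complex.I)‖ ^ 2
      = (s - t) ^ 2 + 4 * (s * t) * Real.sin ((u - v) / 2) ^ 2 := by
  have half_angle : Real.cos u * Real.cos v + Real.sin u * Real.sin v
      = 1 - 2 * Real.sin ((u - v) / 2) ^ 2 := by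
    rw [← Real.cos_sub, Real.sin_sq_eq_half_sub, mul_div_cancel₀ _ two_ne_zero]
    ring
  rw [← Complex.normSq_eq_norm_sq, Complex.normSq_apply]
  simp only [Complex.sub_re, Complex.sub_im, Complex.mul_re, Complex.mul_im,
    Complex.exp_ofReal_mul_I_re, Complex.exp_ofReal_mul_I_im, Complex.ofReal_re,
    Complex.ofReal_im]
  linear_combination s ^ 2 * Real.sin_sq_add_cos_sq u + t ^ 2 * Real.sin_sq_add_cos_sq v
    - 2 * s * t * half_angle

theorem abs_sq_sub_sq_le_of_abs_sub_le {K : Type*} [CommRing K] [LinearOrder K]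
    [IsStrictOrderedRing K] {s t r : K} (ht : 0 ≤ t) (h : |s - t| ≤ r) :
    |s ^ 2 - t ^ 2| ≤ r * (2 * t + r) := by
  have hsum : |s + t| ≤ 2 * t + r := by
    calc |s + t| = |(s - t) + 2 * t| := by ring_nf
      _ ≤ |s - t| + |2 * t| := abs_add_le _ _
      _ ≤ 2 * t + r := by rw [abs_of_nonneg (mul_nonneg zero_le_two ht)]; linarith
  rw [sq_sub_sq, abs_mul, mul_comm]
  exact mul_le_mul h hsum (abs_nonneg _) ((abs_nonneg _).trans h)

theorem one_sub_le_two_mul_abs_sub_midpoint {K : Type*} [Field K] [LinearOrder K]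
    [IsStrictOrderedRing K] (n p m : ℤ) {q : ℤ} (hq : 0 < q) (α x : K) :
    1 - 2 * q * |(n - x) * (α - p / q)|
      ≤ 2 * q * |n * α - (x * (α - p / q) + 1 / (2 * q)) - m| := by
  have hq' : (0 : K) < 2 * q := by positivity
  have hodd : (1 : K) ≤ |((2 * (n * p - m * q) - 1 : ℤ) : K)| := by
    exact_mod_cast Int.one_le_abs (by omega)
  have hsplit : ((2 * (n * p - m * q) - 1 : ℤ) : K)
      = 2 * q * (n * α - (x * (α - p / q) + 1 / (2 * q)) - m)
        - 2 * q * ((n - x) * (α - p / q)) := by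
    push_cast
    field_simp
    ring
  have htri := abs_sub (2 * q * (n * α - (x * (α - p / q) + 1 / (2 * q)) - m))
    (2 * q * ((n - x) * (α - p / q)))
  rw [← hsplit, abs_mul (2 * (q : K)), abs_mul (2 * (q : K)), abs_of_pos hq'] at htri
  linarith

section FermatSpiral

variable {α r : ℝ}

theorem exists_nat_near_of_isRelDense_fermatSpiral (h : IsRelDense (fermatSpiral α) r)
    {R : ℝ} (hR : 0 ≤ R) (θ : ℝ) :
    ∃ (n : ℕ) (m : ℤ), |√n - R| < r ∧ 16 * (√n * R) * |n * α - θ - m| ^ 2 < r ^ 2 := by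
  obtain ⟨_, ⟨n, rfl⟩, hz⟩ := h (R * Complex.exp ((2 * Real.pi * θ : ℝ) * Complex.I))
  have hexp : 2 * Real.pi * Complex.I * (n * α)
      = ((2 * Real.pi * (n * α) : ℝ) : ℂ) * Complex.I := by
    push_cast
    ring
  rw [Metric.mem_ball, dist_eq_norm, hexp] at hz
  have hangle : (2 * Real.pi * (n * α) - 2 * Real.pi * θ) / 2 = Real.pi * (n * α - θ) := by ring
  have hdist : (√n - R) ^ 2 + 4 * (√n * R) * Real.sin (Real.pi * (n * α - θ)) ^ 2 < r ^ 2 := by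
    rw [← hangle, ← norm_polar_sub_polar_sq]
    exact pow_lt_pow_left₀ hz (norm_nonneg _) two_ne_zero
  have hsR : 0 ≤ √n * R := by positivity
  have hround : 4 * |n * α - θ - round (n * α - θ)| ^ 2
      ≤ Real.sin (Real.pi * (n * α - θ)) ^ 2 := by
    calc 4 * |n * α - θ - round (n * α - θ)| ^ 2
        = (2 * |n * α - θ - round (n * α - θ)|) ^ 2 := by ring
      _ ≤ |Real.sin (Real.pi * (n * α - θ))| ^ 2 :=
          pow_le_pow_left₀ (by positivity) (two_mul_abs_sub_round_le_abs_sin _) 2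
      _ = Real.sin (Real.pi * (n * α - θ)) ^ 2 := sq_abs _
  refine ⟨n, round (n * α - θ), abs_lt_of_sq_lt_sq ?_ h.pos.le, ?_⟩
  · have : 0 ≤ 4 * (√n * R) * Real.sin (Real.pi * (n * α - θ)) ^ 2 := by positivity
    linarith
  · linarith [mul_le_mul_of_nonneg_left hround hsR, sq_nonneg (√n - R)]

theorem one_le_mul_abs_of_isRelDense_fermatSpiral (h : IsRelDense (fermatSpiral α) r)
    (p : ℤ) {q : ℤ} (hq : 0 < q) : 1 ≤ 96 * r ^ 2 * (q * |q * α - p|) := by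
  by_contra! hlt
  have hr : 0 < r := h.pos
  have hq1 : (1 : ℝ) ≤ q := by exact_mod_cast hq
  let ε : ℝ := α - p / q
  have hε : q * |q * α - p| = q ^ 2 * |ε| := by
    have : (q : ℝ) * α - p = q * ε := by simp only [ε]; field_simp
    rw [this, abs_mul, abs_of_pos (by positivity)]
    ring
  let R : ℝ := 2 * r * q
  have hrR : 2 * r ≤ R := le_mul_of_one_le_right (by positivity) hq1
  have hR : 0 ≤ R := by positivity
  -- The ray of angle `2πθ` lies midway between two consecutive arms of the spiral near radius `R`.
  let θ : ℝ := R ^ 2 * ε + 1 / (2 * q)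
  obtain ⟨n, m, hn, hclose⟩ := exists_nat_near_of_isRelDense_fermatSpiral h hR θ
  have hnR : |(n : ℝ) - R ^ 2| ≤ 5 * r ^ 2 * q := by
    calc |(n : ℝ) - R ^ 2| = |√n ^ 2 - R ^ 2| := by rw [Real.sq_sqrt n.cast_nonneg]
      _ ≤ r * (2 * R + r) := abs_sq_sub_sq_le_of_abs_sub_le hR hn.le
      _ = 4 * r ^ 2 * q + r ^ 2 := by simp only [R]; ring
      _ ≤ 5 * r ^ 2 * q := by linarith [le_mul_of_one_le_right (sq_nonneg r) hq1]
  have hdrift : 2 * q * |(n - R ^ 2) * ε| ≤ 1 / 2 := by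
    calc 2 * q * |(n - R ^ 2) * ε| = 2 * q * (|n - R ^ 2| * |ε|) := by rw [abs_mul]
      _ ≤ 2 * q * (5 * r ^ 2 * q * |ε|) := by gcongr
      _ = 10 * r ^ 2 * (q * |q * α - p|) := by rw [hε]; ring
      _ ≤ 1 / 2 := by linarith
  have hfar : 1 / 2 ≤ (2 : ℝ) * q * |n * α - θ - m| := by
    have hgap := one_sub_le_two_mul_abs_sub_midpoint n p m hq α (R ^ 2)
    simp only [Int.cast_natCast] at hgap
    linarith
  have hsqrt : R / 2 ≤ √n := by linarith [(abs_lt.1 hn).1]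
  have : 2 * r ^ 2 < r ^ 2 := by
    calc 2 * r ^ 2 = 8 * r ^ 2 * (1 / 2) ^ 2 := by ring
      _ ≤ 8 * r ^ 2 * (2 * q * |n * α - θ - m|) ^ 2 := by gcongr
      _ = 16 * (R / 2 * R) * |n * α - θ - m| ^ 2 := by simp only [R]; ring
      _ ≤ 16 * (√n * R) * |n * α - θ - m| ^ 2 := by gcongr
      _ < r ^ 2 := hclose
  linarith [sq_nonneg r]

theorem isBadlyApproximable_of_isRelDense_fermatSpiral (h : IsRelDense (fermatSpiral α) r) :
    IsBadlyApproximable α := by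
  have hr : 0 < r := h.pos
  refine ⟨1 / (96 * r ^ 2), by positivity, fun p q hq => ?_⟩
  rw [div_le_iff₀' (by positivity)]
  exact_mod_cast one_le_mul_abs_of_isRelDense_fermatSpiral h p (q := q) (by exact_mod_cast hq)

end FermatSpiral

/-- The numerators of the convergents of `[0; a 0, a 1, …]`; `cfNum a (n + 1)` is the numerator of
`[0; a 0, …, a (n - 1)]`, and `cfNum a 0 = 1` is the usual value at index `-1`. -/
def cfNum (a : ℕ → ℤ) : ℕ → ℤ
  | 0 => 1
  | 1 => 0
  | n + 2 => a n * cfNum a (n + 1) + cfNum a n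

/-- The denominators of the convergents of `[0; a 0, a 1, …]`, indexed as in `cfNum`. -/
def cfDen (a : ℕ → ℤ) : ℕ → ℤ
  | 0 => 0
  | 1 => 1
  | n + 2 => a n * cfDen a (n + 1) + cfDen a n

section Convergents

variable {a : ℕ → ℤ}

theorem cfDen_nonneg (ha : ∀ n, 0 ≤ a n) : ∀ n, 0 ≤ cfDen a n
  | 0 => le_rfl
  | 1 => zero_le_one
  | n + 2 => add_nonneg (mul_nonneg (ha n) (cfDen_nonneg ha (n + 1))) (cfDen_nonneg ha n)

theorem cfDen_succ_pos (ha : ∀ n, 0 < a n) : ∀ n, 0 < cfDen a (n + 1)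
  | 0 => zero_lt_one
  | n + 1 => add_pos_of_pos_of_nonneg (mul_pos (ha n) (cfDen_succ_pos ha n))
      (cfDen_nonneg (fun k => (ha k).le) n)

variable {R : Type*} [CommRing R] {η : ℕ → R}

theorem cfDen_mul_sub_cfNum_mul (hη : ∀ n, η n = a n * η (n + 1) + η (n + 2)) :
    ∀ n, cfDen a n * η 1 - cfNum a n * η 0 = (-1) ^ (n + 1) * η n
  | 0 => by simp [cfDen, cfNum]
  | 1 => by simp [cfDen, cfNum]
  | n + 2 => by
    have ih₀ := cfDen_mul_sub_cfNum_mul hη n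
    have ih₁ := cfDen_mul_sub_cfNum_mul hη (n + 1)
    simp only [cfDen, cfNum, Int.cast_add, Int.cast_mul]
    linear_combination a n * ih₁ + ih₀ + (-1) ^ (n + 1) * hη n

theorem cfDen_succ_mul_add_cfDen_mul (hη : ∀ n, η n = a n * η (n + 1) + η (n + 2)) (n : ℕ) :
    cfDen a (n + 1) * η n + cfDen a n * η (n + 1) = η 0 := by
  induction n with
  | zero => simp [cfDen]
  | succ n ih =>
    simp only [cfDen, Int.cast_add, Int.cast_mul]
    linear_combination ih - cfDen a (n + 1) * hη n

end Convergents

/-- The Euclidean algorithm on `η 0 > η 1 > 0` with quotients `a` and remainders `η`, assumed never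
to terminate. It encodes the continued fraction `η 1 / η 0 = [0; a 0, a 1, …]`. -/
structure IsEuclideanExpansion {R : Type*} [CommRing R] [LinearOrder R] (a : ℕ → ℤ) (η : ℕ → R) :
    Prop where
  eq_mul_add : ∀ n, η n = a n * η (n + 1) + η (n + 2)
  pos : ∀ n, 0 < η n
  strictAnti : StrictAnti η

namespace IsEuclideanExpansion

variable {R : Type*} [CommRing R] [LinearOrder R] [IsStrictOrderedRing R] {a : ℕ → ℤ} {η : ℕ → R}

theorem quotient_pos (h : IsEuclideanExpansion a η) (n : ℕ) : 0 < a n := by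
  have hmul : 0 < (a n : R) * η (n + 1) := by
    linarith [h.eq_mul_add n, h.strictAnti (show n < n + 2 by omega)]
  exact_mod_cast pos_of_mul_pos_left hmul (h.pos (n + 1)).le

theorem abs_cfDen_mul_sub_cfNum_mul (h : IsEuclideanExpansion a η) (n : ℕ) :
    |cfDen a n * η 1 - cfNum a n * η 0| = η n := by
  rw [cfDen_mul_sub_cfNum_mul h.eq_mul_add, abs_mul, abs_neg_one_pow, one_mul,
    abs_of_pos (h.pos n)]

theorem quotient_mul_cfDen_mul_le (h : IsEuclideanExpansion a η) (n : ℕ) :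
    a n * (cfDen a (n + 1) * η (n + 1)) ≤ η 0 := by
  have hden : ∀ k, (0 : R) ≤ cfDen a k := fun k => by
    exact_mod_cast cfDen_nonneg (fun j => (h.quotient_pos j).le) k
  have hη : ∀ k, 0 ≤ η k := fun k => (h.pos k).le
  calc a n * (cfDen a (n + 1) * η (n + 1))
      ≤ a n * (cfDen a (n + 1) * η (n + 1))
        + (cfDen a n * η (n + 1) + cfDen a (n + 1) * η (n + 2)) :=
        le_add_of_nonneg_right <|
          add_nonneg (mul_nonneg (hden n) (hη _)) (mul_nonneg (hden _) (hη _))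
    _ = cfDen a (n + 2) * η (n + 1) + cfDen a (n + 1) * η (n + 2) := by
        simp only [cfDen, Int.cast_add, Int.cast_mul]
        ring
    _ = η 0 := cfDen_succ_mul_add_cfDen_mul h.eq_mul_add (n + 1)

theorem quotient_le_of_forall_le_mul_abs (h : IsEuclideanExpansion a η) {C : R}
    (hC : ∀ p q : ℤ, 0 < q → η 0 ≤ C * (q * |q * η 1 - p * η 0|)) (n : ℕ) : a n ≤ C := by
  have hden : 0 < cfDen a (n + 1) := cfDen_succ_pos h.quotient_pos n
  have hlower := hC (cfNum a (n + 1)) (cfDen a (n + 1)) hden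
  rw [h.abs_cfDen_mul_sub_cfNum_mul] at hlower
  exact le_of_mul_le_mul_right ((h.quotient_mul_cfDen_mul_le n).trans hlower)
    (mul_pos (by exact_mod_cast hden) (h.pos (n + 1)))

end IsEuclideanExpansion

/-- Let `α ∈ [0,1)` be irrational with continued fraction expansion
`α = [0; a₁, a₂, …]`, encoded by the Euclidean division data `η₋₁ = 1`, `η₀ = α`,
`η_{k-1} = a_{k+1} η_k + η_{k+1}` with `0 < η_{k+1} < η_k` for all `k ≥ 0`.
If `X(√t, α)` is `r`-relatively dense for some `r > 1/2`, then every partial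
quotient satisfies `aₖ ≤ ⌊96 r²⌋`; in particular `α` is badly approximable. -/
theorem bounded_partial_quotients_of_fermatSpiral_relDense
    (α : ℝ) (hα : α ∈ Set.Ico (0 : ℝ) 1) (hirr : Irrational α)
    (a : ℤ → ℤ) (η : ℤ → ℝ)
    (hη1 : η (-1) = 1) (hη0 : η 0 = α)
    (hrec : ∀ k : ℤ, 0 ≤ k → η (k - 1) = a (k + 1) * η k + η (k + 1))
    (hpos : ∀ k : ℤ, 0 ≤ k → 0 < η (k + 1) ∧ η (k + 1) < η k)
    (r : ℝ) (hr : 1 / 2 < r)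
    (hdense : ∀ x : ℂ, ∃ z ∈ fermatSpiral α, z ∈ Metric.ball x r) :
    (∀ k : ℤ, 1 ≤ k → a k ≤ ⌊96 * r ^ 2⌋) ∧ IsBadlyApproximable α := by
  have hexp : IsEuclideanExpansion (fun n : ℕ => a (n + 1)) (fun n : ℕ => η (n - 1)) := by
    have hanti : StrictAnti fun n : ℕ => η (n - 1) := strictAnti_nat_of_succ_lt fun n => by
      cases n with
      | zero => simpa [hη1, hη0] using hα.2
      | succ n => simpa using (hpos n n.cast_nonneg).2
    refine ⟨fun n => ?_, fun n => ?_, hanti⟩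
    · simpa [add_sub_assoc] using hrec n n.cast_nonneg
    · refine lt_trans ?_ (hanti (show n < n + 2 by omega))
      simpa [add_sub_assoc] using (hpos n n.cast_nonneg).1
  have hrel : IsRelDense (fermatSpiral α) r := hdense
  refine ⟨fun k hk => Int.le_floor.2 ?_, isBadlyApproximable_of_isRelDense_fermatSpiral hrel⟩
  obtain ⟨n, rfl⟩ : ∃ n : ℕ, k = n + 1 := ⟨(k - 1).toNat, by omega⟩
  refine hexp.quotient_le_of_forall_le_mul_abs (fun p q hq => ?_) n
  simpa [hη1, hη0] using one_le_mul_abs_of_isRelDense_fermatSpiral hrel p hq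
end

section
/- Let α ∈ [0,1) be irrational. If the set X(√t, α) = { √n · e^{2πi n α} : n ∈ ℕ } ⊂ ℂ is s-uniformly discrete for some 0 < s < 2, then q·|qα − p| ≥ s²/53 for all (p,q) ∈ ℤ × ℕ with q ≥ 1; in particular α is badly approximable with constant C = s²/53. -/
/-!
Put `ε = q |qα - p|`. The points of the spiral with indices `(kq)²` and `(kq)² + q` differ in
modulus by at most `1 / (2k)` and in argument, modulo `2π`, by `2π |qα - p|`, so their distance is
at most `1 / (2k) + 2πkε`; uniform discreteness makes it at least `2s`. The points with indices `0`
and `1` give `s ≤ 1/2`, which leaves room for an integer `k` with `1/2 ≤ ks ≤ 1`, and then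
`s² ≤ 2πε`.
-/

open Real

/-- A set is `s`-uniformly discrete if every open ball of radius `s` contains at most one of its
points; this is the hypothesis put on the spiral. -/
def IsUniformlyDiscrete {P : Type*} [PseudoMetricSpace P] (s : ℝ) (X : Set P) : Prop :=
  ∀ x : P, (X ∩ Metric.ball x s).Subsingleton

theorem IsUniformlyDiscrete.two_mul_le_dist {V P : Type*} [SeminormedAddCommGroup V]
    [NormedSpace ℝ V] [PseudoMetricSpace P] [NormedAddTorsor V P] {s : ℝ} {X : Set P}
    (hX : IsUniformlyDiscrete s X) {x y : P} (hx : x ∈ X) (hy : y ∈ X) (hxy : x ≠ y) :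
    2 * s ≤ dist x y := by
  by_contra! hlt
  have hx_ball : x ∈ Metric.ball (midpoint ℝ x y) s := by
    rw [Metric.mem_ball, dist_left_midpoint, norm_ofNat]
    linarith
  have hy_ball : y ∈ Metric.ball (midpoint ℝ x y) s := by
    rw [Metric.mem_ball, dist_right_midpoint, norm_ofNat]
    linarith
  exact hxy (hX _ ⟨hx, hx_ball⟩ ⟨hy, hy_ball⟩)

theorem dist_circleMap_le (c : ℂ) (R r φ θ : ℝ) :
    dist (circleMap c R φ) (circleMap c r θ) ≤ |R - r| + |r| * |φ - θ| := by
  have hradial : dist (circleMap c R φ) (circleMap c r φ) = |R - r| := by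
    rw [circleMap, circleMap, dist_add_left, dist_eq_norm, ← sub_mul, ← Complex.ofReal_sub,
      norm_mul, Complex.norm_exp_ofReal_mul_I, mul_one, Complex.norm_real, norm_eq_abs]
  have hangular : dist (circleMap c r φ) (circleMap c r θ) ≤ |r| * |φ - θ| :=
    (lipschitzWith_circleMap c r).dist_le_mul φ θ
  exact (dist_triangle _ (circleMap c r φ) _).trans (add_le_add hradial.le hangular)

theorem sqrt_sq_add_le {x y : ℝ} (hx : 0 < x) (hy : 0 ≤ x ^ 2 + y) :
    √(x ^ 2 + y) ≤ x + y / (2 * x) := by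
  have hrhs : x + y / (2 * x) = (x ^ 2 + y + x ^ 2) / (2 * x) := by
    field_simp
    ring
  rw [hrhs, le_div_iff₀ (by positivity)]
  calc √(x ^ 2 + y) * (2 * x) = 2 * √(x ^ 2 + y) * x := by ring
    _ ≤ √(x ^ 2 + y) ^ 2 + x ^ 2 := two_mul_le_add_sq _ _
    _ = x ^ 2 + y + x ^ 2 := by rw [sq_sqrt hy]

theorem exists_nat_mul_mem_Ico {K : Type*} [Field K] [LinearOrder K] [IsStrictOrderedRing K]
    [FloorSemiring K] {a s : K} (ha : 0 ≤ a) (hs : 0 < s) :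
    ∃ k : ℕ, (k : K) * s ∈ Set.Ico a (a + s) := by
  refine ⟨⌈a / s⌉₊, (div_le_iff₀ hs).mp (Nat.le_ceil _), ?_⟩
  calc (⌈a / s⌉₊ : K) * s < (a / s + 1) * s := by
        gcongr
        exact Nat.ceil_lt_add_one (by positivity)
    _ = a + s := by rw [add_mul, div_mul_cancel₀ a hs.ne', one_mul]

/-- The point of the Fermat spiral with index `n`, in the same form as in `fermatSpiral`. -/
noncomputable def fermatSpiralPoint (α : ℝ) (n : ℕ) : ℂ :=
  √n * Complex.exp (2 * π * Complex.I * (n * α))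

theorem fermatSpiralPoint_mem (α : ℝ) (n : ℕ) : fermatSpiralPoint α n ∈ fermatSpiral α :=
  ⟨n, rfl⟩

theorem fermatSpiralPoint_eq_circleMap (α : ℝ) (n : ℕ) (p : ℤ) :
    fermatSpiralPoint α n = circleMap 0 √n (2 * π * (n * α - p)) := by
  have hangle : 2 * π * (n * α - p) = 2 * π * (n * α) - p * (2 * π) := by ring
  rw [hangle, (periodic_circleMap 0 √n).sub_int_mul_eq p, circleMap_zero, fermatSpiralPoint]
  push_cast
  ring_nf

theorem norm_fermatSpiralPoint (α : ℝ) (n : ℕ) : ‖fermatSpiralPoint α n‖ = √n := by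
  rw [fermatSpiralPoint_eq_circleMap α n 0, norm_circleMap_zero, abs_of_nonneg (sqrt_nonneg _)]

theorem fermatSpiralPoint_injective (α : ℝ) : Function.Injective (fermatSpiralPoint α) := by
  intro m n hmn
  have hsqrt : √(m : ℝ) = √n := by
    rw [← norm_fermatSpiralPoint α m, hmn, norm_fermatSpiralPoint]
  exact_mod_cast (sqrt_inj m.cast_nonneg n.cast_nonneg).mp hsqrt

theorem dist_fermatSpiralPoint_le (α : ℝ) (m n : ℕ) (p : ℤ) :
    dist (fermatSpiralPoint α m) (fermatSpiralPoint α n) ≤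
      |√m - √n| + √n * (2 * π * |(m - n) * α - p|) := by
  rw [fermatSpiralPoint_eq_circleMap α m p, fermatSpiralPoint_eq_circleMap α n 0]
  refine (dist_circleMap_le _ _ _ _ _).trans_eq ?_
  have hangle : 2 * π * (m * α - p) - 2 * π * (n * α - (0 : ℤ)) =
      2 * π * ((m - n) * α - p) := by
    push_cast
    ring
  rw [hangle, abs_mul (2 * π), abs_of_pos two_pi_pos, abs_of_nonneg (sqrt_nonneg _)]

theorem dist_fermatSpiralPoint_sq_add_le (α : ℝ) (p : ℤ) {q k : ℕ} (hq : 0 < q) (hk : 0 < k) :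
    dist (fermatSpiralPoint α ((k * q) ^ 2 + q)) (fermatSpiralPoint α ((k * q) ^ 2)) ≤
      1 / (2 * k) + 2 * π * k * (q * |q * α - p|) := by
  have hdist := dist_fermatSpiralPoint_le α ((k * q) ^ 2 + q) ((k * q) ^ 2) p
  push_cast at hdist
  rw [sqrt_sq (by positivity), add_sub_cancel_left] at hdist
  have hradius_nonneg : 0 ≤ √((k * q : ℝ) ^ 2 + q) - k * q :=
    sub_nonneg.mpr (le_sqrt_of_sq_le (by linarith [q.cast_nonneg (α := ℝ)]))
  have hradius : √((k * q : ℝ) ^ 2 + q) - k * q ≤ 1 / (2 * k) :=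
    calc √((k * q : ℝ) ^ 2 + q) - k * q ≤ q / (2 * (k * q)) :=
          sub_le_iff_le_add'.mpr (sqrt_sq_add_le (by positivity) (by positivity))
      _ = 1 / (2 * k) := by field_simp
  rw [abs_of_nonneg hradius_nonneg] at hdist
  linarith

namespace IsUniformlyDiscrete

variable {α s : ℝ}

theorem two_mul_le_dist_fermatSpiralPoint (hX : IsUniformlyDiscrete s (fermatSpiral α))
    {m n : ℕ} (hmn : m ≠ n) :
    2 * s ≤ dist (fermatSpiralPoint α m) (fermatSpiralPoint α n) :=
  hX.two_mul_le_dist (fermatSpiralPoint_mem α m) (fermatSpiralPoint_mem α n)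
    ((fermatSpiralPoint_injective α).ne hmn)

theorem le_half_of_fermatSpiral (hX : IsUniformlyDiscrete s (fermatSpiral α)) : s ≤ 1 / 2 := by
  have hdist := (hX.two_mul_le_dist_fermatSpiralPoint one_ne_zero).trans
    (dist_fermatSpiralPoint_le α 1 0 0)
  norm_num at hdist
  linarith

theorem two_mul_le_of_fermatSpiral (hX : IsUniformlyDiscrete s (fermatSpiral α)) (p : ℤ)
    {q k : ℕ} (hq : 0 < q) (hk : 0 < k) :
    2 * s ≤ 1 / (2 * k) + 2 * π * k * (q * |q * α - p|) :=
  (hX.two_mul_le_dist_fermatSpiralPoint (by omega)).trans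
    (dist_fermatSpiralPoint_sq_add_le α p hq hk)

end IsUniformlyDiscrete

theorem badlyApproximable_of_fermatSpiral_uniformlyDiscrete_general {α s : ℝ} (hs0 : 0 < s)
    (hX : IsUniformlyDiscrete s (fermatSpiral α)) (p : ℤ) {q : ℕ} (hq : 1 ≤ q) :
    s ^ 2 / (2 * π) ≤ q * |q * α - p| := by
  obtain ⟨k, hks_lower, hks_lt⟩ := exists_nat_mul_mem_Ico one_half_pos.le hs0
  have hks_upper : k * s ≤ 1 := by linarith [hX.le_half_of_fermatSpiral]
  have hk : (0 : ℝ) < k := pos_of_mul_pos_left (by linarith) hs0.le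
  have hradius : 1 / (2 * k) ≤ s := by
    rw [div_le_iff₀ (by positivity)]
    linarith
  have hle : s ≤ 2 * π * k * (q * |q * α - p|) := by
    linarith [hX.two_mul_le_of_fermatSpiral p hq (Nat.cast_pos.mp hk)]
  rw [div_le_iff₀' two_pi_pos]
  calc s ^ 2 = s * s := sq s
    _ ≤ 2 * π * k * (q * |q * α - p|) * s := by gcongr
    _ = k * s * (2 * π * (q * |q * α - p|)) := by ring
    _ ≤ 2 * π * (q * |q * α - p|) := mul_le_of_le_one_left (by positivity) hks_upper

/-- Let `α ∈ [0,1)` be irrational. If `X(√t, α)` is `s`-uniformly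
discrete for some `0 < s < 2`, then `q·|qα − p| ≥ s²/53` for all `p ∈ ℤ` and all
integers `q ≥ 1`; in particular `α` is badly approximable with constant `C = s²/53`. -/
theorem badlyApproximable_of_fermatSpiral_uniformlyDiscrete
    (α : ℝ) (hα : α ∈ Set.Ico (0 : ℝ) 1) (hirr : Irrational α)
    (s : ℝ) (hs0 : 0 < s) (hs2 : s < 2)
    (hdisc : ∀ x : ℂ, Set.Subsingleton (fermatSpiral α ∩ Metric.ball x s)) :
    (∀ (p : ℤ) (q : ℕ), 1 ≤ q → s ^ 2 / 53 ≤ (q : ℝ) * |(q : ℝ) * α - (p : ℝ)|) ∧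
      IsBadlyApproximable α := by
  have hbound (p : ℤ) (q : ℕ) (hq : 1 ≤ q) : s ^ 2 / 53 ≤ (q : ℝ) * |(q : ℝ) * α - (p : ℝ)| :=
    (div_le_div_of_nonneg_left (sq_nonneg s) two_pi_pos (by linarith [pi_lt_four])).trans
      (badlyApproximable_of_fermatSpiral_uniformlyDiscrete_general hs0 hdisc p hq)
  exact ⟨hbound, s ^ 2 / 53, by positivity, hbound⟩
end
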